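/- Let k=(k_1,…,k_r) be a composition, let m be a positive integer, let α∈ℂ∖ℕ with ℜ(α)<1, and set n=|k|+1−dep(k). Then ∫_0^1 Li_k(x)·log^m(1−x)/(x(1−x)^α) dx = (−1)^m·m!·Σ_{|j|=m, dep(j)=n} B((←k^∨)_+; j)·ζ((←k^∨)_+ + j; 1−α), where the sum is over j∈ℕ_0^n with j_1+⋯+j_n=m. -/

import Mathlib

open scoped BigOperators
open MeasureTheory

/-- Multiple polylogarithm `Li_k(z) = Σ_{n₁>⋯>n_r>0} z^{n₁}/(n₁^{k₁}⋯n_r^{k_r})`. -/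
noncomputable def MPL (k : List ℕ) (z : ℝ) : ℝ :=
  if h : 0 < k.length then
    ∑' n : {n : Fin k.length → ℕ // StrictAnti n ∧ ∀ i, 0 < n i},
      z ^ (n.1 ⟨0, h⟩) / ∏ i, (n.1 i : ℝ) ^ k.get i
  else 1

/-- Level-two multiple polylogarithm
`A(k;x) = 2^r Σ_{n₁>⋯>n_r>0, n_j ≡ r+1-j (mod 2)} x^{n₁}/(n₁^{k₁}⋯n_r^{k_r})`. -/
noncomputable def AFn (k : List ℕ) (x : ℝ) : ℝ :=
  if h : 0 < k.length then
    2 ^ k.length *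
      ∑' n : {n : Fin k.length → ℕ //
          StrictAnti n ∧ (∀ i, 0 < n i) ∧ ∀ i, n i % 2 = (k.length - i.val) % 2},
        x ^ (n.1 ⟨0, h⟩) / ∏ i, (n.1 i : ℝ) ^ k.get i
  else 1

/-- Multiple zeta value `ζ(k) = Σ_{n₁>⋯>n_r>0} ∏ 1/n_i^{k_i}`. -/
noncomputable def MZV (k : List ℕ) : ℝ :=
  ∑' n : {n : Fin k.length → ℕ // StrictAnti n ∧ ∀ i, 0 < n i},
    ∏ i, 1 / (n.1 i : ℝ) ^ k.get i

/-- Multiple zeta star value `ζ⋆(k) = Σ_{n₁≥⋯≥n_r>0} ∏ 1/n_i^{k_i}`. -/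
noncomputable def MZSV (k : List ℕ) : ℝ :=
  ∑' n : {n : Fin k.length → ℕ // Antitone n ∧ ∀ i, 0 < n i},
    ∏ i, 1 / (n.1 i : ℝ) ^ k.get i

/-- Multiple T-value `T(k) = 2^r Σ_{n₁>⋯>n_r>0, n_j ≡ r+1-j (mod 2)} ∏ 1/n_i^{k_i}`. -/
noncomputable def MTV (k : List ℕ) : ℝ :=
  2 ^ k.length *
    ∑' n : {n : Fin k.length → ℕ //
        StrictAnti n ∧ (∀ i, 0 < n i) ∧ ∀ i, n i % 2 = (k.length - i.val) % 2},
      ∏ i, 1 / (n.1 i : ℝ) ^ k.get i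

/-- Hurwitz-type multiple zeta value `ζ(k;α) = Σ_{n₁>⋯>n_r>0} ∏ (n_i+α-1)^{-k_i}`. -/
noncomputable def HMZV (k : List ℕ) (α : ℂ) : ℂ :=
  ∑' n : {n : Fin k.length → ℕ // StrictAnti n ∧ ∀ i, 0 < n i},
    ∏ i, ((n.1 i : ℂ) + α - 1) ^ (-(k.get i : ℤ))

/-- Hurwitz-type multiple zeta star value `ζ⋆(k;α) = Σ_{n₁≥⋯≥n_r>0} ∏ (n_i+α-1)^{-k_i}`. -/
noncomputable def HMZSV (k : List ℕ) (α : ℂ) : ℂ :=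
  ∑' n : {n : Fin k.length → ℕ // Antitone n ∧ ∀ i, 0 < n i},
    ∏ i, ((n.1 i : ℂ) + α - 1) ^ (-(k.get i : ℤ))

/-- Hurwitz-type multiple T-value
`T(k;α) = Σ_{m₁>⋯>m_r>0} 2^r ∏_i (2m_i - r - 2 + i + α)^{-k_i}` (1-indexed `i`). -/
noncomputable def HMTV (k : List ℕ) (α : ℂ) : ℂ :=
  ∑' n : {n : Fin k.length → ℕ // StrictAnti n ∧ ∀ i, 0 < n i},
    2 ^ k.length *
      ∏ i, (2 * (n.1 i : ℂ) - (k.length : ℂ) - 1 + (i.val : ℂ) + α) ^ (-(k.get i : ℤ))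

/-- The boolean word (sequence of bits between consecutive units) of a composition. -/
def toWord : List ℕ → List Bool
  | [] => []
  | [a] => List.replicate (a - 1) false
  | a :: b :: rest => List.replicate (a - 1) false ++ true :: toWord (b :: rest)

/-- The composition corresponding to a boolean word. -/
def fromWord : List Bool → List ℕ
  | [] => [1]
  | false :: w =>
    match fromWord w with
    | [] => [1]
    | a :: t => (a + 1) :: t
  | true :: w => 1 :: fromWord w

/-- Hoffman dual of a composition: swap commas and plus signs in
`k = (1+⋯+1, …, 1+⋯+1)`. -/
def HDual (k : List ℕ) : List ℕ := fromWord ((toWord k).map fun b => !b)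

/-- `k₊ = (k₁+1, k₂, …, k_r)`. -/
def plusOne : List ℕ → List ℕ
  | [] => []
  | a :: t => (a + 1) :: t

/-- `Refines l k` means the composition `k` can be obtained from `l`
by combining some consecutive parts of `l`, i.e. `l ⪰ k`. -/
inductive Refines : List ℕ → List ℕ → Prop
  | nil : Refines [] []
  | cons (b l k : List ℕ) : b ≠ [] → Refines l k → Refines (b ++ l) (b.sum :: k)

/-- Arakawa–Kaneko zeta function `ξ(s;k) = (1/Γ(s)) ∫_0^∞ t^{s-1}/(e^t-1) Li_k(1-e^{-t}) dt`. -/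
noncomputable def xiAK (s : ℂ) (k : List ℕ) : ℂ :=
  (1 / Complex.Gamma s) *
    ∫ t in Set.Ioi (0 : ℝ),
      (t : ℂ) ^ (s - 1) / ((Real.exp t : ℂ) - 1) * (MPL k (1 - Real.exp (-t)) : ℂ)

/-- Kaneko–Tsumura η-function `η(s;k) = (1/Γ(s)) ∫_0^∞ t^{s-1}/(1-e^t) Li_k(1-e^{t}) dt`. -/
noncomputable def etaKT (s : ℂ) (k : List ℕ) : ℂ :=
  (1 / Complex.Gamma s) *
    ∫ t in Set.Ioi (0 : ℝ),
      (t : ℂ) ^ (s - 1) / (1 - (Real.exp t : ℂ)) * (MPL k (1 - Real.exp t) : ℂ)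

/-- Kaneko–Tsumura ψ-function `ψ(s;k) = (1/Γ(s)) ∫_0^∞ t^{s-1} A(k; tanh(t/2))/sinh(t) dt`. -/
noncomputable def psiKT (s : ℂ) (k : List ℕ) : ℂ :=
  (1 / Complex.Gamma s) *
    ∫ t in Set.Ioi (0 : ℝ),
      (t : ℂ) ^ (s - 1) * ((AFn k (Real.tanh (t / 2)) / Real.sinh t : ℝ) : ℂ)

/-- Riemann zeta value `ζ(a) = Σ_{n>0} 1/n^a`. -/
noncomputable def zeta1 (a : ℕ) : ℝ := ∑' n : {n : ℕ // 0 < n}, 1 / (n.1 : ℝ) ^ a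

/-- Double zeta value `ζ(a,b) = Σ_{n₁>n₂>0} 1/(n₁^a n₂^b)`. -/
noncomputable def zeta2 (a b : ℕ) : ℝ :=
  ∑' p : {p : ℕ × ℕ // p.2 < p.1 ∧ 0 < p.2}, 1 / ((p.1.1 : ℝ) ^ a * (p.1.2 : ℝ) ^ b)

/-- Single T-value `T(a) = 2 Σ_{n>0 odd} 1/n^a`. -/
noncomputable def T1 (a : ℕ) : ℝ := 2 * ∑' n : {n : ℕ // 0 < n ∧ n % 2 = 1}, 1 / (n.1 : ℝ) ^ a

/-- Double T-value `T(a,b) = 4 Σ_{n₁>n₂>0, n₁ even, n₂ odd} 1/(n₁^a n₂^b)`. -/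
noncomputable def T2 (a b : ℕ) : ℝ :=
  4 * ∑' p : {p : ℕ × ℕ // p.2 < p.1 ∧ 0 < p.2 ∧ p.1 % 2 = 0 ∧ p.2 % 2 = 1},
    1 / ((p.1.1 : ℝ) ^ a * (p.1.2 : ℝ) ^ b)

/-! The theorem is the `m`-th derivative in `β = -α` of its case `m = 0`. For real `β > -1` that
case is an identity between sums of nonnegative terms, so it can be proved in `ℝ≥0∞`: integrating
the power series of `Li_k` term by term gives beta integrals, whose two geometric-sum relations and
recurrence turn the prepending of `dx / (1 - x)` or `dx / x` to the word of `Li_k` into the raising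
of the first exponent, or the prepending of an exponent `1`, on the Hurwitz side; this is the
Hoffman dual. Both sides are analytic for `Re β > -1`, the integral because it is the complex moment
generating function of `log y` under the measure `Li_k (1 - y) / (1 - y) dy`, so they agree there
together with all their derivatives. -/

section Chains

open Set ENNReal

variable {ι : Type*} {r : ℕ}

/-- The `R`-chains `n 0 R n 1 R ⋯ R n (r - 1)` of length `r` in the set `S`. -/
def chains (R : ι → ι → Prop) (r : ℕ) (S : Set ι) : Set (Fin r → ι) :=
  {n | (∀ ⦃i j⦄, i < j → R (n i) (n j)) ∧ ∀ i, n i ∈ S}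

/-- The sum of `∏ i, φ i (n i)` over all `R`-chains `n` in `S`, in `ℝ≥0∞` so that no summability
has to be checked. Multiple zeta values and truncated multiple harmonic sums are of this form. -/
noncomputable def chainSum (R : ι → ι → Prop) (φ : Fin r → ι → ℝ≥0∞) (S : Set ι) : ℝ≥0∞ :=
  ∑' n : chains R r S, ∏ i, φ i (n.1 i)

variable {R : ι → ι → Prop} {S : Set ι}

theorem chainSum_zero (φ : Fin 0 → ι → ℝ≥0∞) : chainSum R φ S = 1 := by
  have : Unique (chains R 0 S) :=
    { default := ⟨Fin.elim0, fun i => i.elim0, fun i => i.elim0⟩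
      uniq := fun n => Subtype.ext (Subsingleton.elim _ _) }
  simp [chainSum]

theorem cons_mem_chains_iff {x : ι} {n : Fin r → ι} :
    Fin.cons x n ∈ chains R (r + 1) S ↔ x ∈ S ∧ n ∈ chains R r (S ∩ {y | R x y}) := by
  simp only [chains, mem_ofPred_eq, Fin.forall_fin_succ, Fin.cons_zero, Fin.cons_succ,
    Fin.succ_lt_succ_iff, mem_inter_iff, forall_and, Fin.succ_pos, Fin.not_lt_zero,
    false_imp_iff, true_imp_iff, true_and]
  tauto

/-- A chain of length `r + 1` amounts to its head `x` and a chain of length `r` in the part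
of `S` above `x`. -/
def chainsSuccEquiv (R : ι → ι → Prop) (r : ℕ) (S : Set ι) :
    (Σ x : S, chains R r (S ∩ {y | R x y})) ≃ chains R (r + 1) S where
  toFun p := ⟨Fin.cons p.1 p.2, cons_mem_chains_iff.2 ⟨p.1.2, p.2.2⟩⟩
  invFun n :=
    have h := cons_mem_chains_iff.1 ((Fin.cons_self_tail n.1).symm ▸ n.2)
    ⟨⟨n.1 0, h.1⟩, ⟨Fin.tail n.1, h.2⟩⟩
  left_inv _ := rfl
  right_inv n := Subtype.ext (Fin.cons_self_tail n.1)

theorem chainSum_succ (φ : Fin (r + 1) → ι → ℝ≥0∞) :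
    chainSum R φ S = ∑' x : S, φ 0 x * chainSum R (Fin.tail φ) (S ∩ {y | R x y}) := by
  simp only [chainSum, ← ENNReal.tsum_mul_left]
  rw [← ENNReal.tsum_sigma fun (x : S) (n : chains R r (S ∩ {y | R x y})) =>
    φ 0 x * ∏ i, Fin.tail φ i (n.1 i), ← (chainsSuccEquiv R r S).tsum_eq]
  simp only [Fin.prod_univ_succ]
  rfl

theorem chainSum_flip (φ : Fin r → ι → ℝ≥0∞) :
    chainSum (flip R) (φ ∘ Fin.rev) S = chainSum R φ S := by
  let e : chains R r S ≃ chains (flip R) r S :=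
    (Fin.revPerm.arrowCongr (Equiv.refl ι)).subtypeEquiv fun n =>
      and_congr ⟨fun h i j hij => h (Fin.rev_lt_rev.2 hij), fun h i j hij => by
          simpa [flip] using h (Fin.rev_lt_rev.2 hij)⟩
        (Fin.revPerm.forall_congr_left (p := fun i => n i ∈ S))
  rw [chainSum, chainSum, ← e.tsum_eq]
  exact tsum_congr fun n => Equiv.prod_comp Fin.revPerm fun i => φ i (n.1 i)

end Chains

section BetaTransform

open Set (Ioo)
open ProbabilityTheory
open Finset.HasAntidiagonal (antidiagonal)
open scoped ENNReal

/-- The beta integral `∫₀¹ y ^ (s - 1) * (1 - y) ^ n dy`, in `ℝ≥0∞`. -/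
noncomputable def betaLIntegral (s : ℝ) (n : ℕ) : ℝ≥0∞ :=
  ∫⁻ y in Ioo (0 : ℝ) 1, ENNReal.ofReal (y ^ (s - 1) * (1 - y) ^ n)

theorem betaLIntegral_eq_ofReal_beta {s : ℝ} (hs : 0 < s) (n : ℕ) :
    betaLIntegral s n = ENNReal.ofReal (beta s (n + 1)) := by
  have hB : 0 < beta s (n + 1) := beta_pos hs n.cast_add_one_pos
  have h1 : ∫⁻ y in Ioo (0 : ℝ) 1, ENNReal.ofReal (1 / beta s (n + 1)) *
      ENNReal.ofReal (y ^ (s - 1) * (1 - y) ^ n) = 1 := by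
    rw [← lintegral_betaPDF_eq_one hs (β := n + 1) n.cast_add_one_pos, lintegral_betaPDF]
    refine setLIntegral_congr_fun measurableSet_Ioo fun y _ => ?_
    rw [← ENNReal.ofReal_mul (by positivity), add_sub_cancel_right, Real.rpow_natCast, mul_assoc]
  rw [lintegral_const_mul' _ _ ENNReal.ofReal_ne_top, one_div, ENNReal.ofReal_inv_of_pos hB,
    mul_comm, ← div_eq_mul_inv, ENNReal.div_eq_one_iff (by simpa using hB)
      ENNReal.ofReal_ne_top] at h1
  exact h1

theorem betaLIntegral_zero {s : ℝ} (hs : 0 < s) : betaLIntegral s 0 = ENNReal.ofReal s⁻¹ := by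
  have := (Real.Gamma_pos_of_pos hs).ne'
  rw [betaLIntegral_eq_ofReal_beta hs, beta, Nat.cast_zero, zero_add, Real.Gamma_one,
    Real.Gamma_add_one hs.ne']
  field_simp

theorem ofReal_mul_betaLIntegral_succ {s : ℝ} (hs : 0 < s) (n : ℕ) :
    ENNReal.ofReal s * betaLIntegral s (n + 1) = (n + 1) * betaLIntegral (s + 1) n := by
  have hn : (0 : ℝ) < n + 1 := n.cast_add_one_pos
  rw [betaLIntegral_eq_ofReal_beta hs, betaLIntegral_eq_ofReal_beta (by linarith),
    ← ENNReal.ofReal_natCast, ← ENNReal.ofReal_one,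
    ← ENNReal.ofReal_add (by positivity) (by simp),
    ← ENNReal.ofReal_mul hs.le, ← ENNReal.ofReal_mul hn.le]
  congr 1
  rw [beta, beta, Nat.cast_succ, Real.Gamma_add_one hn.ne', Real.Gamma_add_one hs.ne',
    add_right_comm s 1, ← add_assoc]
  ring

theorem measurable_ofReal_rpow_mul_pow (s : ℝ) (n : ℕ) :
    Measurable fun y : ℝ => ENNReal.ofReal (y ^ s * (1 - y) ^ n) := by
  fun_prop

theorem tsum_ofReal_mul_pow {x y : ℝ} (hx : 0 ≤ x) (hy : y ∈ Ioo (0 : ℝ) 1) :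
    ∑' i : ℕ, ENNReal.ofReal (x * (1 - y) ^ i) = ENNReal.ofReal (x * y⁻¹) := by
  have h := (hasSum_geometric_of_lt_one (sub_nonneg.2 hy.2.le)
    (sub_lt_self 1 hy.1)).mul_left x
  rw [sub_sub_cancel] at h
  rw [← h.tsum_eq, ENNReal.ofReal_tsum_of_nonneg
    (fun i => mul_nonneg hx (pow_nonneg (sub_nonneg.2 hy.2.le) i)) h.summable]

theorem tsum_betaLIntegral_add_left (s : ℝ) (n : ℕ) :
    ∑' j : ℕ, betaLIntegral (s + j) (n + 1) = betaLIntegral s n := by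
  simp only [betaLIntegral]
  rw [← lintegral_tsum fun j => (measurable_ofReal_rpow_mul_pow _ _).aemeasurable]
  refine setLIntegral_congr_fun measurableSet_Ioo fun y hy => ?_
  have hy1 : 0 < 1 - y := sub_pos.2 hy.2
  have h := tsum_ofReal_mul_pow (mul_nonneg (Real.rpow_nonneg hy.1.le (s - 1))
    (pow_nonneg hy1.le (n + 1))) (y := 1 - y) ⟨hy1, sub_lt_self 1 hy.1⟩
  rw [sub_sub_cancel, pow_succ, mul_assoc, mul_inv_cancel_right₀ hy1.ne'] at h
  rw [← h]
  refine tsum_congr fun j => ?_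
  rw [add_sub_right_comm, Real.rpow_add_natCast hy.1.ne', pow_succ]
  ring_nf

theorem tsum_betaLIntegral_add_right (s : ℝ) (n : ℕ) :
    ∑' i : ℕ, betaLIntegral (s + 1) (n + i) = betaLIntegral s n := by
  simp only [betaLIntegral]
  rw [← lintegral_tsum fun i => (measurable_ofReal_rpow_mul_pow _ _).aemeasurable]
  refine setLIntegral_congr_fun measurableSet_Ioo fun y hy => ?_
  have h := tsum_ofReal_mul_pow (mul_nonneg (Real.rpow_nonneg hy.1.le (s + 1 - 1))
    (pow_nonneg (sub_nonneg.2 hy.2.le) n)) hy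
  rw [add_sub_right_comm, Real.rpow_add_one hy.1.ne', mul_right_comm,
    mul_inv_cancel_right₀ hy.1.ne'] at h
  rw [← h]
  refine tsum_congr fun i => ?_
  rw [add_sub_right_comm, Real.rpow_add_one hy.1.ne', pow_add]
  ring_nf

/-- The power series `∑ₙ c n * (1 - y) ^ n` with nonnegative coefficients, as a density on
`(0, 1)`. -/
noncomputable def powerSeriesDensity (c : ℕ → ℝ≥0∞) (y : ℝ) : ℝ≥0∞ :=
  ∑' n, c n * ENNReal.ofReal (1 - y) ^ n

/-- The integral `∫₀¹ y ^ (s - 1) * (∑ₙ c n * (1 - y) ^ n) dy` of a power series with nonnegative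
coefficients, integrated term by term. -/
noncomputable def betaTransform (c : ℕ → ℝ≥0∞) (s : ℝ) : ℝ≥0∞ :=
  ∑' n, c n * betaLIntegral s n

theorem betaTransform_eq_lintegral (c : ℕ → ℝ≥0∞) (s : ℝ) :
    betaTransform c s = ∫⁻ y in Ioo (0 : ℝ) 1,
      ENNReal.ofReal (y ^ (s - 1)) * powerSeriesDensity c y := by
  simp only [betaTransform, betaLIntegral]
  rw [tsum_congr fun n => (lintegral_const_mul (c n) (measurable_ofReal_rpow_mul_pow _ n)).symm,
    ← lintegral_tsum fun n => ((measurable_ofReal_rpow_mul_pow _ n).const_mul _).aemeasurable]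
  refine setLIntegral_congr_fun measurableSet_Ioo fun y hy => ?_
  simp only [powerSeriesDensity, ← ENNReal.tsum_mul_left]
  refine tsum_congr fun n => ?_
  rw [ENNReal.ofReal_mul (Real.rpow_nonneg hy.1.le _), ENNReal.ofReal_pow (sub_nonneg.2 hy.2.le)]
  exact mul_left_comm _ _ _

theorem tsum_betaTransform_add {c : ℕ → ℝ≥0∞} (hc : c 0 = 0) (s : ℝ) :
    ∑' j : ℕ, betaTransform c (s + j) = betaTransform (fun n => c (n + 1)) s := by
  simp only [betaTransform]
  rw [ENNReal.tsum_comm, tsum_eq_zero_add' ENNReal.summable]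
  simp only [ENNReal.tsum_mul_left, hc, tsum_betaLIntegral_add_left, zero_mul, tsum_zero, zero_add]

theorem betaTransform_sum_range (c : ℕ → ℝ≥0∞) (s : ℝ) :
    betaTransform (fun n => ∑ l ∈ Finset.range (n + 1), c l) (s + 1) = betaTransform c s := by
  simp only [betaTransform]
  calc ∑' n, (∑ l ∈ Finset.range (n + 1), c l) * betaLIntegral (s + 1) n
      = ∑' n, ∑ p ∈ antidiagonal n, c p.1 * betaLIntegral (s + 1) (p.1 + p.2) := by
        refine tsum_congr fun n => ?_
        rw [Finset.Nat.sum_antidiagonal_eq_sum_range_succ_mk, Finset.sum_mul]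
        refine Finset.sum_congr rfl fun l hl => ?_
        rw [Nat.add_sub_cancel' (Finset.mem_range_succ_iff.1 hl)]
    _ = ∑' l, ∑' i, c l * betaLIntegral (s + 1) (l + i) := by
        rw [← ENNReal.tsum_prod, ← Finset.HasAntidiagonal.sigmaAntidiagonalEquivProd.tsum_eq,
          ENNReal.tsum_sigma']
        simp only [Finset.HasAntidiagonal.sigmaAntidiagonalEquivProd, Equiv.coe_fn_mk]
        exact tsum_congr fun n => (Finset.tsum_subtype _ _).symm
    _ = ∑' l, c l * betaLIntegral s l := by
        simp only [ENNReal.tsum_mul_left, tsum_betaLIntegral_add_right]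

theorem ofReal_mul_betaTransform {c : ℕ → ℝ≥0∞} (hc : c 0 = 0) {s : ℝ} (hs : 0 < s) :
    ENNReal.ofReal s * betaTransform c s =
      betaTransform (fun n => (n + 1) * c (n + 1)) (s + 1) := by
  simp only [betaTransform]
  rw [tsum_eq_zero_add' ENNReal.summable, hc, zero_mul, zero_add, ← ENNReal.tsum_mul_left]
  refine tsum_congr fun n => ?_
  rw [mul_left_comm, ofReal_mul_betaLIntegral_succ hs]
  ring

end BetaTransform

section PolylogWords

open Set (Ioi)
open scoped ENNReal

/-- The word of the multiple polylogarithm `Li_k` as an iterated integral: `true` stands for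
`dx / (1 - x)`, `false` for `dx / x`, outermost form first. -/
def polylogWord (k : List ℕ) : List Bool :=
  k.flatMap fun a => List.replicate (a - 1) false ++ [true]

/-- The Taylor coefficients of the iterated integral attached to a word of forms
`false = dx / x` and `true = dx / (1 - x)`. -/
noncomputable def polylogCoeff : List Bool → ℕ → ℝ≥0∞
  | [], n => if n = 0 then 1 else 0
  | false :: w, n => ENNReal.ofReal (n : ℝ)⁻¹ * polylogCoeff w n
  | true :: w, n => ENNReal.ofReal (n : ℝ)⁻¹ * ∑ l ∈ Finset.range n, polylogCoeff w l

theorem polylogCoeff_zero {w : List Bool} (hw : w ≠ []) : polylogCoeff w 0 = 0 := by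
  match w with
  | false :: w => simp [polylogCoeff]
  | true :: w => simp [polylogCoeff]

theorem succ_mul_ofReal_inv_mul (n : ℕ) (x : ℝ≥0∞) :
    ((n : ℝ≥0∞) + 1) * (ENNReal.ofReal ((n + 1 : ℕ) : ℝ)⁻¹ * x) = x := by
  rw [← Nat.cast_succ, ENNReal.ofReal_inv_of_pos (by positivity), ENNReal.ofReal_natCast,
    ENNReal.mul_inv_cancel_left (by simp) (by simp)]

theorem betaTransform_polylogCoeff_nil {s : ℝ} (hs : 0 < s) :
    betaTransform (polylogCoeff []) s = ENNReal.ofReal s⁻¹ := by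
  rw [betaTransform, tsum_eq_single 0 fun n hn => by simp [polylogCoeff, hn],
    betaLIntegral_zero hs]
  simp [polylogCoeff]

theorem ofReal_mul_betaTransform_polylogCoeff_true (w : List Bool) {s : ℝ} (hs : 0 < s) :
    ENNReal.ofReal s * betaTransform (polylogCoeff (true :: w)) s =
      betaTransform (polylogCoeff w) s := by
  rw [ofReal_mul_betaTransform (polylogCoeff_zero (by simp)) hs, ← betaTransform_sum_range _ s]
  simp only [polylogCoeff, succ_mul_ofReal_inv_mul]

theorem ofReal_mul_betaTransform_polylogCoeff_false {w : List Bool} (hw : w ≠ []) {s : ℝ}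
    (hs : 0 < s) :
    ENNReal.ofReal s * betaTransform (polylogCoeff (false :: w)) s =
      ∑' j : ℕ, betaTransform (polylogCoeff w) (s + 1 + j) := by
  rw [ofReal_mul_betaTransform (polylogCoeff_zero (by simp)) hs,
    tsum_betaTransform_add (polylogCoeff_zero hw)]
  simp only [polylogCoeff, succ_mul_ofReal_inv_mul]

theorem betaTransform_polylogCoeff_lt_top (w : List Bool) {s : ℝ} (hs : 0 < s) :
    betaTransform (polylogCoeff w) s < ∞ := by
  induction w with
  | nil => simp [betaTransform_polylogCoeff_nil hs]
  | cons b w ih =>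
    cases b with
    | true =>
      rw [← ofReal_mul_betaTransform_polylogCoeff_true w hs] at ih
      exact ENNReal.lt_top_of_mul_ne_top_right ih.ne (ENNReal.ofReal_pos.2 hs).ne'
    | false =>
      refine (ENNReal.tsum_le_tsum fun n => mul_le_mul_left (?_ : _ ≤ polylogCoeff w n) _).trans_lt
        ih
      exact mul_le_of_le_one_left' (ENNReal.ofReal_le_one.2 (Nat.cast_inv_le_one n))

theorem tsum_betaTransform_polylogCoeff_lt_top {w : List Bool} (hw : w ≠ []) {s : ℝ} (hs : 0 < s) :
    ∑' j : ℕ, betaTransform (polylogCoeff w) (s + j) < ∞ := by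
  have h : ∑' j : ℕ, betaTransform (polylogCoeff w) (s + (j + 1 : ℕ)) =
      ENNReal.ofReal s * betaTransform (polylogCoeff (false :: w)) s := by
    rw [ofReal_mul_betaTransform_polylogCoeff_false hw hs]
    exact tsum_congr fun j => by rw [Nat.cast_succ, add_right_comm, add_assoc]
  rw [tsum_eq_zero_add' ENNReal.summable, h, Nat.cast_zero, add_zero]
  exact ENNReal.add_lt_top.2 ⟨betaTransform_polylogCoeff_lt_top w hs,
    ENNReal.mul_lt_top ENNReal.ofReal_lt_top (betaTransform_polylogCoeff_lt_top _ hs)⟩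

/-- The factor `(x + a) ^ (-k_i)` of a Hurwitz-type multiple zeta series. -/
noncomputable def hurwitzWeight {r : ℕ} (a : ℝ) (k : Fin r → ℕ) (i : Fin r) (x : ℕ) : ℝ≥0∞ :=
  ENNReal.ofReal ((x + a)⁻¹ ^ k i)

theorem tsum_Ioi_nat (f : ℕ → ℝ≥0∞) (N : ℕ) : ∑' x : Ioi N, f x = ∑' j, f (N + 1 + j) := by
  have : Ioi N = Set.range fun j => N + 1 + j := by
    ext x
    exact ⟨fun hx => ⟨x - (N + 1), Nat.add_sub_cancel' hx⟩, fun ⟨j, hj⟩ => by grind⟩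
  rw [this, tsum_range f (add_right_injective (N + 1))]

theorem chainSum_hurwitzWeight_cons (a : ℝ) (e : ℕ) (es : List ℕ) (N : ℕ) :
    chainSum (· < ·) (hurwitzWeight a (e :: es).get) (Ioi N) = ∑' j : ℕ,
      ENNReal.ofReal (((N + 1 + j : ℕ) + a)⁻¹ ^ e) *
        chainSum (· < ·) (hurwitzWeight a es.get) (Ioi (N + 1 + j)) := by
  rw [← tsum_Ioi_nat fun x => ENNReal.ofReal ((x + a)⁻¹ ^ e) *
    chainSum (· < ·) (hurwitzWeight a es.get) (Ioi x)]
  refine (chainSum_succ _).trans (tsum_congr fun x => ?_)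
  have : Ioi N ∩ {y | (x : ℕ) < y} = Ioi (x : ℕ) :=
    Set.inter_eq_right.2 (Set.Ioi_subset_Ioi x.2.le)
  rw [this]
  rfl

theorem fromWord_ne_nil (w : List Bool) : fromWord w ≠ [] := by
  match w with
  | [] => simp [fromWord]
  | true :: w => simp [fromWord]
  | false :: w => cases h : fromWord w <;> simp [fromWord, h]

theorem fromWord_false_cons (w : List Bool) : fromWord (false :: w) = plusOne (fromWord w) := by
  obtain ⟨e, es, h⟩ := List.exists_cons_of_ne_nil (fromWord_ne_nil w)
  simp [fromWord, plusOne, h]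

theorem eq_ofReal_inv_mul_of_ofReal_mul_eq {s : ℝ} (hs : 0 < s) {x y : ℝ≥0∞}
    (h : ENNReal.ofReal s * x = y) : x = ENNReal.ofReal s⁻¹ * y := by
  rw [← h, ENNReal.ofReal_inv_of_pos hs,
    ENNReal.inv_mul_cancel_left (ENNReal.ofReal_pos.2 hs).ne' ENNReal.ofReal_ne_top]

/-- The exponents of the multiple zeta series attached to an iterated integral: the Hoffman dual
of its word, read from the innermost summation variable outwards. -/
def dualExponents (w : List Bool) : List ℕ :=
  fromWord (w.map fun b => !b)

theorem betaTransform_polylogCoeff_eq_mul_chainSum {a : ℝ} (ha : -1 < a) (w : List Bool) :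
    ∃ e es, dualExponents (w ++ [true]) = e :: es ∧ ∀ l : ℕ,
      betaTransform (polylogCoeff (w ++ [true])) ((l + 1 : ℕ) + a) =
        ENNReal.ofReal (((l + 1 : ℕ) + a)⁻¹ ^ e) *
          chainSum (· < ·) (hurwitzWeight a es.get) (Ioi (l + 1)) := by
  have hpos (l : ℕ) : 0 < ((l + 1 : ℕ) : ℝ) + a := by
    push_cast
    linarith [l.cast_nonneg (α := ℝ)]
  have hmul (l e : ℕ) (x : ℝ≥0∞) : ENNReal.ofReal (((l + 1 : ℕ) + a)⁻¹ ^ (e + 1)) * x =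
      ENNReal.ofReal ((l + 1 : ℕ) + a)⁻¹ * (ENNReal.ofReal (((l + 1 : ℕ) + a)⁻¹ ^ e) * x) := by
    rw [pow_succ', ENNReal.ofReal_mul (inv_nonneg.2 (hpos l).le), mul_assoc]
  induction w with
  | nil =>
    refine ⟨2, [], rfl, fun l => ?_⟩
    rw [List.nil_append, eq_ofReal_inv_mul_of_ofReal_mul_eq (hpos l)
      (ofReal_mul_betaTransform_polylogCoeff_true [] (hpos l)),
      betaTransform_polylogCoeff_nil (hpos l), chainSum_zero, hmul, pow_one, mul_one]
  | cons b w ih =>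
    obtain ⟨e, es, hE, hM⟩ := ih
    cases b with
    | true =>
      refine ⟨e + 1, es, ?_, fun l => ?_⟩
      · exact (fromWord_false_cons _).trans (congrArg plusOne hE)
      · rw [List.cons_append, eq_ofReal_inv_mul_of_ofReal_mul_eq (hpos l)
          (ofReal_mul_betaTransform_polylogCoeff_true _ (hpos l)), hM, hmul]
    | false =>
      refine ⟨1, e :: es, congrArg (1 :: ·) hE, fun l => ?_⟩
      rw [List.cons_append, eq_ofReal_inv_mul_of_ofReal_mul_eq (hpos l)
        (ofReal_mul_betaTransform_polylogCoeff_false (by simp) (hpos l)), pow_one,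
        chainSum_hurwitzWeight_cons]
      congr 1
      refine tsum_congr fun j => ?_
      rw [show l + 1 + 1 + j = l + 1 + j + 1 by ring, ← hM]
      push_cast
      ring_nf

theorem tsum_betaTransform_polylogCoeff_eq_chainSum {a : ℝ} (ha : -1 < a) (w : List Bool) :
    ∑' j : ℕ, betaTransform (polylogCoeff (w ++ [true])) (a + 1 + j) =
      chainSum (· < ·) (hurwitzWeight a (dualExponents (w ++ [true])).get) (Ioi 0) := by
  obtain ⟨e, es, hE, hM⟩ := betaTransform_polylogCoeff_eq_mul_chainSum ha w
  rw [hE, chainSum_hurwitzWeight_cons]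
  refine tsum_congr fun j => ?_
  rw [show 0 + 1 + j = j + 1 by ring, ← hM]
  push_cast
  ring_nf

end PolylogWords

section Polylogarithms

open Set (Ioo Ioi)
open scoped ENNReal

theorem polylogCoeff_replicate_false_append (w : List Bool) (n a : ℕ) :
    polylogCoeff (List.replicate a false ++ w) n =
      ENNReal.ofReal ((n : ℝ)⁻¹ ^ a) * polylogCoeff w n := by
  induction a with
  | zero => simp
  | succ a ih =>
    rw [List.replicate_succ, List.cons_append, polylogCoeff, ih, pow_succ',
      ENNReal.ofReal_mul (by positivity), mul_assoc]

theorem polylogCoeff_polylogWord_cons {a : ℕ} (ha : 0 < a) (k : List ℕ) (n : ℕ) :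
    polylogCoeff (polylogWord (a :: k)) n =
      ENNReal.ofReal ((n : ℝ)⁻¹ ^ a) *
        ∑ l ∈ Finset.range n, polylogCoeff (polylogWord k) l := by
  obtain ⟨a, rfl⟩ := Nat.exists_eq_succ_of_ne_zero ha.ne'
  rw [polylogWord, List.flatMap_cons, ← polylogWord, List.append_assoc,
    polylogCoeff_replicate_false_append, List.singleton_append, polylogCoeff, ← mul_assoc,
    Nat.succ_sub_one, ← ENNReal.ofReal_mul (by positivity), ← pow_succ]

theorem chainSum_gt_Ioo_eq_sum_polylogCoeff {k : List ℕ} (hk : ∀ a ∈ k, 0 < a) {N : ℕ}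
    (hN : 0 < N) :
    chainSum (· > ·) (hurwitzWeight 0 k.get) (Ioo 0 N) =
      ∑ l ∈ Finset.range N, polylogCoeff (polylogWord k) l := by
  induction k generalizing N with
  | nil => simp [chainSum_zero, polylogWord, polylogCoeff, hN]
  | cons a k ih =>
    have ha : 0 < a := hk a List.mem_cons_self
    have hterm (x : Ioo 0 N) : hurwitzWeight 0 (a :: k).get 0 x *
        chainSum (· > ·) (Fin.tail (hurwitzWeight 0 (a :: k).get)) (Ioo 0 N ∩ {y | (x : ℕ) > y}) =
          polylogCoeff (polylogWord (a :: k)) x := by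
      have hS : Ioo 0 N ∩ {y | (x : ℕ) > y} = Ioo 0 (x : ℕ) := by grind
      rw [polylogCoeff_polylogWord_cons ha, hS, ← ih (fun b hb => hk b (.tail a hb)) x.2.1]
      simp only [hurwitzWeight, add_zero]
      rfl
    rw [chainSum_succ, tsum_congr hterm, ← Finset.coe_Ioo,
      Finset.tsum_subtype' (Finset.Ioo 0 N) (polylogCoeff (polylogWord (a :: k)))]
    refine Finset.sum_subset (fun x hx => by grind) fun x hx hx' => ?_
    obtain rfl : x = 0 := by grind
    rw [polylogCoeff_polylogWord_cons ha, Finset.sum_range_zero, mul_zero]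

theorem MPL_cons_eq_toReal_chainSum (a : ℕ) (k : List ℕ) {x : ℝ} (hx : 0 ≤ x) :
    MPL (a :: k) x = (chainSum (· > ·) (Fin.cons
      (fun n => ENNReal.ofReal (x ^ n) * hurwitzWeight 0 (a :: k).get 0 n)
      (hurwitzWeight 0 k.get) : Fin (k.length + 1) → ℕ → ℝ≥0∞) (Ioi 0)).toReal := by
  rw [MPL, dif_pos (List.length_pos_of_ne_nil (List.cons_ne_nil a k)), chainSum,
    ENNReal.tsum_toReal_eq fun n => ENNReal.prod_ne_top fun i _ => by
      induction i using Fin.cases <;> simp [hurwitzWeight, ENNReal.mul_eq_top]]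
  refine tsum_congr fun n => ?_
  simp only [ENNReal.toReal_mul, ENNReal.toReal_prod, hurwitzWeight, Fin.prod_univ_succ,
    Fin.cons_zero, Fin.cons_succ, add_zero, div_eq_mul_inv, ← Finset.prod_inv_distrib, inv_pow]
  rw [ENNReal.toReal_ofReal (by positivity), ENNReal.toReal_ofReal (by positivity), mul_assoc]
  congr 2
  refine (Fin.prod_univ_succ (n := k.length) _).trans (congrArg (HMul.hMul _) ?_)
  exact Finset.prod_congr rfl fun i _ => (ENNReal.toReal_ofReal (by positivity)).symm

theorem MPL_eq_mul_toReal_tsum_polylogCoeff {k : List ℕ} (hk : k ≠ []) (hkpos : ∀ a ∈ k, 0 < a)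
    {x : ℝ} (hx : 0 ≤ x) :
    MPL k x =
      x * (∑' n, polylogCoeff (polylogWord k) (n + 1) * ENNReal.ofReal x ^ n).toReal := by
  obtain ⟨a, k, rfl⟩ := List.exists_cons_of_ne_nil hk
  have hterm (n : Ioi 0) : ENNReal.ofReal (x ^ (n : ℕ)) * hurwitzWeight 0 (a :: k).get 0 n *
      chainSum (· > ·) (hurwitzWeight 0 k.get) (Ioi 0 ∩ {y | (n : ℕ) > y}) =
        polylogCoeff (polylogWord (a :: k)) n * ENNReal.ofReal x ^ (n : ℕ) := by
    have hS : Ioi 0 ∩ {y | (n : ℕ) > y} = Ioo 0 (n : ℕ) := rfl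
    rw [polylogCoeff_polylogWord_cons (hkpos a List.mem_cons_self), hS,
      ← chainSum_gt_Ioo_eq_sum_polylogCoeff (fun b hb => hkpos b (.tail a hb)) n.2, mul_assoc,
      mul_comm, ENNReal.ofReal_pow hx]
    simp only [hurwitzWeight, add_zero, List.get_cons_zero]
  rw [MPL_cons_eq_toReal_chainSum a k hx, chainSum_succ]
  simp only [Fin.cons_zero, Fin.tail_cons]
  rw [tsum_congr hterm,
    tsum_Ioi_nat fun n => polylogCoeff (polylogWord (a :: k)) n * ENNReal.ofReal x ^ n]
  simp only [zero_add, add_comm 1, pow_succ, ← mul_assoc, ENNReal.tsum_mul_right,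
    ENNReal.toReal_mul, ENNReal.toReal_ofReal hx]
  exact mul_comm _ _

end Polylogarithms

section HoffmanDual

theorem polylogWord_eq_toWord_append {k : List ℕ} (hk : k ≠ []) :
    polylogWord k = toWord k ++ [true] := by
  match k with
  | [a] => simp [polylogWord, toWord]
  | a :: b :: k =>
    rw [polylogWord, List.flatMap_cons, ← polylogWord, polylogWord_eq_toWord_append (by simp),
      toWord]
    simp

theorem toWord_append_singleton (a : ℕ) (k : List ℕ) :
    toWord (k ++ [a]) = polylogWord k ++ List.replicate (a - 1) false := by
  match k with
  | [] => simp [polylogWord, toWord]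
  | [b] => simp [polylogWord, toWord]
  | b :: c :: k =>
    have ih := toWord_append_singleton a (c :: k)
    simp only [List.cons_append] at ih ⊢
    rw [toWord, ih]
    simp [polylogWord]

theorem toWord_reverse (k : List ℕ) : toWord k.reverse = (toWord k).reverse := by
  match k with
  | [] => rfl
  | [a] => simp [toWord]
  | a :: b :: k =>
    rw [List.reverse_cons, toWord_append_singleton, polylogWord_eq_toWord_append (by simp),
      toWord_reverse (b :: k), toWord]
    simp

theorem fromWord_append_true (w : List Bool) : fromWord (w ++ [true]) = fromWord w ++ [1] := by
  induction w with
  | nil => rfl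
  | cons b w ih =>
    obtain ⟨e, es, h⟩ := List.exists_cons_of_ne_nil (fromWord_ne_nil w)
    cases b <;> simp [fromWord, ih, h]

theorem fromWord_append_false (w : List Bool) :
    fromWord (w ++ [false]) = (plusOne (fromWord w).reverse).reverse := by
  induction w with
  | nil => rfl
  | cons b w ih =>
    obtain ⟨es, e, h⟩ := List.eq_nil_or_concat (fromWord w) |>.resolve_left (fromWord_ne_nil w)
    cases b <;> cases es <;> simp [fromWord, ih, h, plusOne]

theorem fromWord_reverse (w : List Bool) : fromWord w.reverse = (fromWord w).reverse := by
  induction w with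
  | nil => rfl
  | cons b w ih =>
    cases b with
    | true => rw [List.reverse_cons, fromWord_append_true, ih, fromWord, List.reverse_cons]
    | false =>
      rw [List.reverse_cons, fromWord_append_false, ih, List.reverse_reverse, fromWord_false_cons]

theorem plusOne_HDual_reverse {k : List ℕ} (hk : k ≠ []) :
    plusOne (HDual k.reverse) = (dualExponents (polylogWord k)).reverse := by
  rw [HDual, ← fromWord_false_cons, toWord_reverse, dualExponents, ← fromWord_reverse,
    polylogWord_eq_toWord_append hk]
  simp

theorem length_fromWord (w : List Bool) : (fromWord w).length = w.count true + 1 := by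
  induction w with
  | nil => rfl
  | cons b w ih =>
    obtain ⟨e, es, h⟩ := List.exists_cons_of_ne_nil (fromWord_ne_nil w)
    cases b <;> simp_all [fromWord]

theorem count_false_polylogWord {k : List ℕ} (hk : ∀ a ∈ k, 0 < a) :
    (polylogWord k).count false + k.length = k.sum := by
  induction k with
  | nil => rfl
  | cons a k ih =>
    have ha : 0 < a := hk a List.mem_cons_self
    have ih := ih fun b hb => hk b (.tail a hb)
    rw [polylogWord, List.flatMap_cons, ← polylogWord, List.sum_cons, List.length_cons]
    simp only [List.append_assoc, List.cons_append, List.nil_append, List.count_append,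
      List.count_replicate_self, ne_eq, Bool.true_eq_false, not_false_eq_true,
      List.count_cons_of_ne]
    omega

theorem length_dualExponents_polylogWord {k : List ℕ} (hk : ∀ a ∈ k, 0 < a) :
    (dualExponents (polylogWord k)).length = k.sum + 1 - k.length := by
  have hcount : ((polylogWord k).map fun b => !b).count true = (polylogWord k).count false :=
    List.count_map_of_injective _ _ Bool.not_injective false
  rw [dualExponents, length_fromWord, hcount]
  have := count_false_polylogWord hk
  omega

end HoffmanDual

section IteratedDerivatives

open Set (EqOn)
open Filter Topology
open scoped Nat

theorem sum_antidiagonalTuple_succ {M : Type*} [AddCommMonoid M] (r m : ℕ)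
    (f : (Fin (r + 1) → ℕ) → M) :
    ∑ j ∈ Finset.Nat.antidiagonalTuple (r + 1) m, f j =
      ∑ i ∈ Finset.range (m + 1),
        ∑ j ∈ Finset.Nat.antidiagonalTuple r (m - i), f (Fin.cons i j) := by
  rw [← Finset.Nat.sum_antidiagonal_eq_sum_range_succ fun i l =>
    ∑ j ∈ Finset.Nat.antidiagonalTuple r l, f (Fin.cons i j)]
  change ((List.Nat.antidiagonalTuple (r + 1) m).map f).sum =
    ((List.Nat.antidiagonal m).map fun p =>
      ((List.Nat.antidiagonalTuple r p.2).map fun j => f (Fin.cons p.1 j)).sum).sum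
  simp only [List.Nat.antidiagonalTuple, List.flatMap_def, List.map_flatten, List.sum_flatten,
    List.map_map, Function.comp_def]

theorem iteratedDeriv_prod_div_factorial {𝕜 : Type*} [NontriviallyNormedField 𝕜] [CharZero 𝕜]
    {r : ℕ} {f : Fin r → 𝕜 → 𝕜} {z : 𝕜} (m : ℕ) (hf : ∀ i, ContDiffAt 𝕜 m (f i) z) :
    iteratedDeriv m (fun w => ∏ i, f i w) z / m ! =
      ∑ j ∈ Finset.Nat.antidiagonalTuple r m, ∏ i, iteratedDeriv (j i) (f i) z / (j i)! := by
  induction r generalizing m with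
  | zero =>
    cases m with
    | zero => simp
    | succ m => simp [iteratedDeriv_const]
  | succ r ih =>
    have htail (l : ℕ) (hl : l ≤ m) : ∀ i : Fin r, ContDiffAt 𝕜 l (f i.succ) z := fun i =>
      (hf i.succ).of_le (by exact_mod_cast hl)
    simp only [Fin.prod_univ_succ]
    rw [iteratedDeriv_fun_mul (hf 0) (contDiffAt_prod fun i _ => hf i.succ), Finset.sum_div,
      sum_antidiagonalTuple_succ]
    refine Finset.sum_congr rfl fun i hi => ?_
    have hi : i ≤ m := Finset.mem_range_succ_iff.1 hi
    simp only [Fin.cons_zero, Fin.cons_succ, ← Finset.mul_sum]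
    rw [← ih (m - i) (htail _ (m.sub_le i)), Nat.cast_choose 𝕜 hi]
    have := m.factorial_ne_zero
    field_simp

theorem iteratedDeriv_inv_pow_div_factorial {𝕜 : Type*} [NontriviallyNormedField 𝕜] [CharZero 𝕜]
    (e m : ℕ) (z : 𝕜) :
    iteratedDeriv m (fun w : 𝕜 => w⁻¹ ^ e) z / m ! =
      (-1) ^ m * ((e + m - 1).choose m : 𝕜) * z⁻¹ ^ (e + m) := by
  have hfun : (fun w : 𝕜 => w⁻¹ ^ e) = fun w => w ^ (-e : ℤ) := by
    simp
  have hprod : ∏ i ∈ Finset.range m, (((-e : ℤ) : 𝕜) - i) = (-1) ^ m * (e.ascFactorial m : 𝕜) := by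
    have h (i : ℕ) : ((-e : ℤ) : 𝕜) - i = -((e + i : ℕ) : 𝕜) := by
      push_cast
      ring
    simp only [h, Finset.prod_neg, Finset.card_range, Nat.ascFactorial_eq_prod_range,
      Nat.cast_prod]
  have hm : (m ! : 𝕜) ≠ 0 := by exact_mod_cast m.factorial_ne_zero
  rw [hfun, iteratedDeriv_eq_iterate, iter_deriv_zpow, hprod, ← neg_add', zpow_neg,
    Nat.ascFactorial_eq_factorial_mul_choose', ← Nat.cast_add, zpow_natCast, inv_pow]
  push_cast
  field_simp

variable {E : Type*} [NormedAddCommGroup E] [NormedSpace ℂ E]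

theorem tendstoLocallyUniformlyOn_iteratedDeriv [CompleteSpace E] {ι : Type*} {l : Filter ι}
    {F : ι → ℂ → E} {f : ℂ → E} {U : Set ℂ} (hf : TendstoLocallyUniformlyOn F f l U)
    (hF : ∀ i, DifferentiableOn ℂ (F i) U) (hU : IsOpen U) (m : ℕ) :
    TendstoLocallyUniformlyOn (fun i => iteratedDeriv m (F i)) (iteratedDeriv m f) l U := by
  induction m generalizing F f with
  | zero => simpa only [iteratedDeriv_zero] using hf
  | succ m ih =>
    simp only [iteratedDeriv_succ']
    exact ih (hf.deriv (.of_forall hF) hU) fun i => (hF i).deriv hU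

theorem hasSum_iteratedDeriv_of_summable_norm [CompleteSpace E] {ι : Type*} {u : ι → ℝ}
    {F : ι → ℂ → E} {U : Set ℂ} (hu : Summable u) (hF : ∀ i, DifferentiableOn ℂ (F i) U)
    (hU : IsOpen U) (hle : ∀ i, ∀ w ∈ U, ‖F i w‖ ≤ u i) (m : ℕ) {z : ℂ} (hz : z ∈ U) :
    HasSum (fun i => iteratedDeriv m (F i) z) (iteratedDeriv m (fun w => ∑' i, F i w) z) := by
  have h := (tendstoLocallyUniformlyOn_iteratedDeriv
    (tendstoUniformlyOn_tsum hu hle).tendstoLocallyUniformlyOn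
    (fun t => .fun_sum fun i _ => hF i) hU m).tendsto_at hz
  refine h.congr fun t => iteratedDeriv_fun_sum fun i _ => ?_
  exact ((hF i).contDiffOn hU).contDiffAt (hU.mem_nhds hz)

theorem eqOn_of_forall_ofReal {a : ℝ} {f g : ℂ → E} (hf : AnalyticOnNhd ℂ f {z | a < z.re})
    (hg : AnalyticOnNhd ℂ g {z | a < z.re}) (h : ∀ t : ℝ, a < t → f t = g t) :
    EqOn f g {z | a < z.re} := by
  refine hf.eqOn_of_preconnected_of_frequently_eq hg (convex_halfSpace_re_gt a).isPreconnected
    (z₀ := ((a + 1 : ℝ) : ℂ)) (by simp) ?_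
  have hfreq : ∃ᶠ t : ℝ in 𝓝[≠] (a + 1), f t = g t :=
    (((lt_mem_nhds (lt_add_one a)).mono h).filter_mono nhdsWithin_le_nhds).frequently
  exact (Complex.continuous_ofReal.continuousWithinAt.tendsto_nhdsWithin fun t ht => by
    exact Complex.ofReal_injective.ne ht).frequently hfreq

end IteratedDerivatives

section HurwitzSeries

open Set (Ioi)
open scoped ENNReal Nat

variable {r : ℕ} {K n : Fin r → ℕ} {a : ℝ} {β : ℂ}

/-- The term `∏ i, (n i + β) ^ (-K i)` of a Hurwitz-type multiple zeta series. -/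
def hurwitzTerm {𝕜 : Type*} [Field 𝕜] (K n : Fin r → ℕ) (β : 𝕜) : 𝕜 :=
  ∏ i, ((n i : 𝕜) + β)⁻¹ ^ K i

/-- The Hurwitz-type multiple zeta value `ζ(K; β + 1)`, with exponents indexed by `Fin r`. -/
noncomputable def hurwitzSeries (K : Fin r → ℕ) (β : ℂ) : ℂ :=
  ∑' n : chains (· > ·) r (Ioi (0 : ℕ)), hurwitzTerm K n β

theorem HMZV_ofFn (K : Fin r → ℕ) (γ : ℂ) :
    HMZV (List.ofFn K) γ = hurwitzSeries K (γ - 1) := by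
  have h (L : List ℕ) (hL : L.length = r) :
      HMZV L γ = hurwitzSeries (fun i => L.get (i.cast hL.symm)) (γ - 1) := by
    subst hL
    simp only [HMZV, hurwitzSeries, hurwitzTerm, zpow_neg, zpow_natCast, inv_pow, add_sub_assoc]
    rfl
  rw [h _ List.length_ofFn]
  congr
  ext i
  simp

theorem natCast_add_pos (ha : -1 < a) {x : ℕ} (hx : 0 < x) : 0 < x + a := by
  have : (1 : ℝ) ≤ x := by exact_mod_cast hx
  linarith

theorem natCast_add_ne_zero (hβ : -1 < β.re) {x : ℕ} (hx : 0 < x) : (x : ℂ) + β ≠ 0 := by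
  intro h
  have := congrArg Complex.re h
  exact (natCast_add_pos hβ hx).ne' (by simpa using this)

theorem norm_inv_natCast_add_le (ha : -1 < a) (hβ : a ≤ β.re) {x : ℕ} (hx : 0 < x) :
    ‖((x : ℂ) + β)⁻¹‖ ≤ (x + a)⁻¹ := by
  rw [norm_inv]
  refine inv_anti₀ (natCast_add_pos ha hx) ?_
  calc x + a ≤ ((x : ℂ) + β).re := by simpa using hβ
    _ ≤ ‖(x : ℂ) + β‖ := Complex.re_le_norm _

theorem norm_hurwitzTerm_le (ha : -1 < a) (hβ : a ≤ β.re) (hn : ∀ i, 0 < n i) :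
    ‖hurwitzTerm K n β‖ ≤ hurwitzTerm K n a := by
  simp only [hurwitzTerm, norm_prod, norm_pow]
  gcongr with i
  exact norm_inv_natCast_add_le ha hβ (hn i)

theorem toReal_prod_hurwitzWeight (ha : -1 < a) (hn : ∀ i, 0 < n i) :
    (∏ i, hurwitzWeight a K i (n i)).toReal = hurwitzTerm K n a := by
  simp only [ENNReal.toReal_prod, hurwitzWeight, hurwitzTerm]
  refine Finset.prod_congr rfl fun i _ => ENNReal.toReal_ofReal ?_
  have := natCast_add_pos ha (hn i)
  positivity

theorem summable_hurwitzTerm (ha : -1 < a)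
    (hK : chainSum (· > ·) (hurwitzWeight a K) (Ioi 0) < ∞) :
    Summable fun n : chains (· > ·) r (Ioi (0 : ℕ)) => hurwitzTerm K n a :=
  (ENNReal.summable_toReal hK.ne).congr fun n => toReal_prod_hurwitzWeight ha n.2.2

theorem hurwitzSeries_ofReal (ha : -1 < a) (K : Fin r → ℕ) :
    hurwitzSeries K a = (chainSum (· > ·) (hurwitzWeight a K) (Ioi 0)).toReal := by
  rw [chainSum, ENNReal.tsum_toReal_eq fun n =>
    ENNReal.prod_ne_top fun i _ => by simp [hurwitzWeight], Complex.ofReal_tsum]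
  refine tsum_congr fun n => ?_
  rw [toReal_prod_hurwitzWeight ha n.2.2]
  simp [hurwitzTerm]

theorem chainSum_hurwitzWeight_add_lt_top (ha : -1 < a)
    (hK : chainSum (· > ·) (hurwitzWeight a K) (Ioi 0) < ∞) (j : Fin r → ℕ) :
    chainSum (· > ·) (hurwitzWeight a (K + j)) (Ioi 0) < ∞ := by
  calc chainSum (· > ·) (hurwitzWeight a (K + j)) (Ioi 0)
      ≤ ∑' n : chains (· > ·) r (Ioi (0 : ℕ)), (∏ i, hurwitzWeight a K i (n.1 i)) *
          ∏ i, ENNReal.ofReal ((1 + a)⁻¹ ^ j i) := by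
        refine ENNReal.tsum_le_tsum fun n => ?_
        rw [← Finset.prod_mul_distrib]
        refine Finset.prod_le_prod' fun i _ => ?_
        have h1 : 0 < 1 + a := by linarith
        have hn1 : (1 : ℝ) ≤ n.1 i := by exact_mod_cast n.2.2 i
        have hn : 0 < n.1 i + a := natCast_add_pos ha (n.2.2 i)
        rw [hurwitzWeight, hurwitzWeight, ← ENNReal.ofReal_mul (by positivity), Pi.add_apply,
          pow_add]
        gcongr
    _ = chainSum (· > ·) (hurwitzWeight a K) (Ioi 0) *
          ∏ i, ENNReal.ofReal ((1 + a)⁻¹ ^ j i) := ENNReal.tsum_mul_right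
    _ < ∞ := ENNReal.mul_lt_top hK (ENNReal.prod_lt_top fun i _ => ENNReal.ofReal_lt_top)

theorem differentiableOn_hurwitzTerm (ha : -1 < a) (hn : ∀ i, 0 < n i) :
    DifferentiableOn ℂ (hurwitzTerm K n) {z : ℂ | a < z.re} := by
  refine .fun_finsetProd fun i _ => .fun_pow (.fun_inv (by fun_prop) fun β hβ => ?_) _
  exact natCast_add_ne_zero (ha.trans hβ) (hn i)

theorem analyticOnNhd_hurwitzSeries
    (hK : ∀ a : ℝ, -1 < a → chainSum (· > ·) (hurwitzWeight a K) (Ioi 0) < ∞) :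
    AnalyticOnNhd ℂ (hurwitzSeries K) {z | -1 < z.re} := by
  intro β hβ
  obtain ⟨a, ha, haβ⟩ := exists_between (show -1 < β.re from hβ)
  have hU : IsOpen {z : ℂ | a < z.re} := isOpen_lt continuous_const Complex.continuous_re
  exact (Complex.differentiableOn_tsum_of_summable_norm (summable_hurwitzTerm ha (hK a ha))
    (fun n => differentiableOn_hurwitzTerm ha n.2.2) hU
    fun n w hw => norm_hurwitzTerm_le ha (le_of_lt hw) n.2.2).analyticAt (hU.mem_nhds haβ)

theorem iteratedDeriv_hurwitzTerm (hβ : -1 < β.re) (hn : ∀ i, 0 < n i) (m : ℕ) :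
    iteratedDeriv m (hurwitzTerm K n) β =
      (-1) ^ m * m ! * ∑ j ∈ Finset.Nat.antidiagonalTuple r m,
        ((∏ i, (K i + j i - 1).choose (j i) : ℕ) : ℂ) * hurwitzTerm (K + j) n β := by
  have hm : (m ! : ℂ) ≠ 0 := by exact_mod_cast m.factorial_ne_zero
  have hcd (i : Fin r) : ContDiffAt ℂ m (fun β => ((n i : ℂ) + β)⁻¹ ^ K i) β :=
    .pow (.inv (by fun_prop) (natCast_add_ne_zero hβ (hn i))) _
  have hfactor (i : Fin r) (l : ℕ) := iteratedDeriv_inv_pow_div_factorial (K i) l (n i + β)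
  rw [mul_right_comm, ← div_eq_iff hm]
  change iteratedDeriv m (fun β => ∏ i, ((n i : ℂ) + β)⁻¹ ^ K i) β / m ! = _
  simp only [hurwitzTerm]
  rw [iteratedDeriv_prod_div_factorial m hcd, Finset.mul_sum]
  refine Finset.sum_congr rfl fun j hj => ?_
  rw [Nat.cast_prod, ← (Finset.Nat.mem_antidiagonalTuple.1 hj), ← Finset.prod_pow_eq_pow_sum,
    ← Finset.prod_mul_distrib, ← Finset.prod_mul_distrib]
  refine Finset.prod_congr rfl fun i _ => ?_
  rw [iteratedDeriv_comp_const_add (j i) (fun w : ℂ => w⁻¹ ^ K i)]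
  simp only [hfactor, Pi.add_apply, mul_assoc]

theorem iteratedDeriv_hurwitzSeries
    (hK : ∀ a : ℝ, -1 < a → chainSum (· > ·) (hurwitzWeight a K) (Ioi 0) < ∞)
    (hβ : -1 < β.re) (m : ℕ) :
    iteratedDeriv m (hurwitzSeries K) β =
      (-1) ^ m * m ! * ∑ j ∈ Finset.Nat.antidiagonalTuple r m,
        ((∏ i, (K i + j i - 1).choose (j i) : ℕ) : ℂ) * hurwitzSeries (K + j) β := by
  obtain ⟨a, ha, haβ⟩ := exists_between hβ
  have hderiv := hasSum_iteratedDeriv_of_summable_norm (summable_hurwitzTerm ha (hK a ha))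
    (fun n => differentiableOn_hurwitzTerm ha n.2.2)
    (isOpen_lt continuous_const Complex.continuous_re)
    (fun n w hw => norm_hurwitzTerm_le ha (le_of_lt hw) n.2.2) m haβ
  refine (hderiv.congr_fun fun n => (iteratedDeriv_hurwitzTerm hβ n.2.2 m).symm).unique
    (.mul_left _ (hasSum_sum fun j _ => .mul_left _ (Summable.hasSum ?_)))
  exact .of_norm_bounded
    (summable_hurwitzTerm ha (chainSum_hurwitzWeight_add_lt_top ha (hK a ha) j))
    fun n => norm_hurwitzTerm_le ha haβ.le n.2.2

theorem chainSum_lt_hurwitzWeight_reverse {L : List ℕ} (hL : L.length = r) (a : ℝ) (S : Set ℕ) :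
    chainSum (· < ·) (hurwitzWeight a L.reverse.get) S =
      chainSum (· > ·) (hurwitzWeight a fun i : Fin r => L.getD i 0) S := by
  have h (L' : List ℕ) (hL' : L'.length = r) :
      chainSum (· < ·) (hurwitzWeight a L'.get) S =
        chainSum (· < ·) (hurwitzWeight a fun i : Fin r => L'.get (i.cast hL'.symm)) S := by
    subst hL'
    rfl
  rw [h _ (by simpa using hL), ← chainSum_flip]
  subst hL
  congr
  ext i x
  have hi : L.length - 1 - (L.length - (i + 1)) = i := by omega
  simp [hurwitzWeight, hi]

end HurwitzSeries

section PowerSeriesMeasure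

open Set (Ioo Ioi EqOn)
open ProbabilityTheory
open scoped ENNReal Nat

variable {c : ℕ → ℝ≥0∞}

/-- The measure `(∑ₙ c n * (1 - y) ^ n) dy` on `(0, 1)`. The Mellin transform of its density is the
moment generating function of `log` under it. -/
noncomputable def powerSeriesMeasure (c : ℕ → ℝ≥0∞) : Measure ℝ :=
  (volume.restrict (Ioo 0 1)).withDensity (powerSeriesDensity c)

theorem measurable_powerSeriesDensity (c : ℕ → ℝ≥0∞) : Measurable (powerSeriesDensity c) :=
  .tsum fun n => by fun_prop

theorem lintegral_exp_mul_log_powerSeriesMeasure (c : ℕ → ℝ≥0∞) (a : ℝ) :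
    ∫⁻ y, ENNReal.ofReal (Real.exp (a * Real.log y)) ∂powerSeriesMeasure c =
      betaTransform c (a + 1) := by
  rw [powerSeriesMeasure, lintegral_withDensity_eq_lintegral_mul _
    (measurable_powerSeriesDensity c) (by fun_prop), betaTransform_eq_lintegral,
    add_sub_cancel_right]
  refine setLIntegral_congr_fun measurableSet_Ioo fun y hy => ?_
  rw [Real.rpow_def_of_pos hy.1, mul_comm (Real.log y), mul_comm]
  rfl

theorem mgf_log_powerSeriesMeasure (c : ℕ → ℝ≥0∞) (a : ℝ) :
    mgf Real.log (powerSeriesMeasure c) a = (betaTransform c (a + 1)).toReal := by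
  rw [mgf, integral_eq_lintegral_of_nonneg_ae (.of_forall fun y => (Real.exp_pos _).le)
    (by fun_prop), lintegral_exp_mul_log_powerSeriesMeasure]

theorem mem_interior_integrableExpSet_log_powerSeriesMeasure
    (hc : ∀ s : ℝ, 0 < s → betaTransform c s < ∞) {a : ℝ} (ha : -1 < a) :
    a ∈ interior (integrableExpSet Real.log (powerSeriesMeasure c)) := by
  refine interior_maximal (fun t (ht : -1 < t) => ?_) isOpen_Ioi (show a ∈ Ioi (-1) from ha)
  refine (lintegral_ofReal_ne_top_iff_integrable (by fun_prop)
    (.of_forall fun y => (Real.exp_pos _).le)).1 ?_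
  rw [lintegral_exp_mul_log_powerSeriesMeasure]
  exact (hc _ (by linarith)).ne

theorem integral_powerSeriesMeasure (hc : betaTransform c 1 < ∞) (g : ℝ → ℂ) :
    ∫ y, g y ∂powerSeriesMeasure c = ∫ y in Ioo 0 1, (powerSeriesDensity c y).toReal • g y := by
  have hmeas := measurable_powerSeriesDensity c
  refine integral_withDensity_eq_integral_toReal_smul hmeas (ae_lt_top hmeas ?_) g
  simpa [betaTransform_eq_lintegral] using hc.ne

theorem integral_log_pow_mul_exp_powerSeriesMeasure {r : ℕ} {K : Fin r → ℕ}
    (hc : ∀ s : ℝ, 0 < s → betaTransform c s < ∞)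
    (hK : ∀ a : ℝ, -1 < a →
      betaTransform c (a + 1) = chainSum (· > ·) (hurwitzWeight a K) (Ioi 0))
    (m : ℕ) {β : ℂ} (hβ : -1 < β.re) :
    ∫ y, Real.log y ^ m * Complex.exp (β * Real.log y) ∂powerSeriesMeasure c =
      (-1) ^ m * m ! * ∑ j ∈ Finset.Nat.antidiagonalTuple r m,
        ((∏ i, (K i + j i - 1).choose (j i) : ℕ) : ℂ) * hurwitzSeries (K + j) β := by
  have hKfin (a : ℝ) (ha : -1 < a) : chainSum (· > ·) (hurwitzWeight a K) (Ioi 0) < ∞ :=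
    hK a ha ▸ hc _ (by linarith)
  have hmgf : EqOn (complexMGF Real.log (powerSeriesMeasure c)) (hurwitzSeries K)
      {z | -1 < z.re} := by
    refine eqOn_of_forall_ofReal (analyticOnNhd_complexMGF.mono fun z hz =>
      mem_interior_integrableExpSet_log_powerSeriesMeasure hc hz)
      (analyticOnNhd_hurwitzSeries hKfin) fun a ha => ?_
    rw [complexMGF_ofReal, mgf_log_powerSeriesMeasure, hurwitzSeries_ofReal ha, hK a ha]
  rw [← iteratedDeriv_hurwitzSeries hKfin hβ, ← iteratedDeriv_complexMGF
    (mem_interior_integrableExpSet_log_powerSeriesMeasure hc hβ)]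
  exact (hmgf.eventuallyEq_of_mem
    ((isOpen_lt continuous_const Complex.continuous_re).mem_nhds hβ)).iteratedDeriv_eq m

end PowerSeriesMeasure

section PolylogIntegral

open Set (Ioi)
open scoped ENNReal

variable {k : List ℕ}

theorem betaTransform_polylogCoeff_succ_lt_top (hk : k ≠ []) {s : ℝ} (hs : 0 < s) :
    betaTransform (fun n => polylogCoeff (polylogWord k) (n + 1)) s < ∞ := by
  have hw : polylogWord k ≠ [] := by simp [polylogWord_eq_toWord_append hk]
  rw [← tsum_betaTransform_add (polylogCoeff_zero hw)]
  exact tsum_betaTransform_polylogCoeff_lt_top hw hs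

theorem betaTransform_polylogCoeff_succ_eq_chainSum (hk : k ≠ []) (hkpos : ∀ a ∈ k, 0 < a)
    {a : ℝ} (ha : -1 < a) :
    betaTransform (fun n => polylogCoeff (polylogWord k) (n + 1)) (a + 1) =
      chainSum (· > ·) (hurwitzWeight a fun i : Fin (k.sum + 1 - k.length) =>
        (plusOne (HDual k.reverse)).getD i 0) (Ioi 0) := by
  have hlen : (plusOne (HDual k.reverse)).length = k.sum + 1 - k.length := by
    rw [plusOne_HDual_reverse hk, List.length_reverse, length_dualExponents_polylogWord hkpos]
  rw [← chainSum_lt_hurwitzWeight_reverse hlen, plusOne_HDual_reverse hk, List.reverse_reverse,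
    polylogWord_eq_toWord_append hk, ← tsum_betaTransform_polylogCoeff_eq_chainSum ha,
    tsum_betaTransform_add (polylogCoeff_zero (by simp))]

theorem integral_MPL_mul_log_pow_div (hk : k ≠ []) (hkpos : ∀ a ∈ k, 0 < a) (m : ℕ) (α : ℂ) :
    (∫ x in (0 : ℝ)..1, ((MPL k x * Real.log (1 - x) ^ m : ℝ) : ℂ) /
        ((x : ℂ) * ((1 : ℂ) - (x : ℂ)) ^ α)) =
      ∫ y, Real.log y ^ m * Complex.exp (-α * Real.log y)
        ∂powerSeriesMeasure fun n => polylogCoeff (polylogWord k) (n + 1) := by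
  have hsubst := intervalIntegral.integral_comp_sub_left (a := 0) (b := 1)
    (fun x : ℝ => ((MPL k x * Real.log (1 - x) ^ m : ℝ) : ℂ) /
      ((x : ℂ) * ((1 : ℂ) - (x : ℂ)) ^ α)) 1
  rw [sub_self, sub_zero] at hsubst
  rw [← hsubst, integral_powerSeriesMeasure (betaTransform_polylogCoeff_succ_lt_top hk one_pos),
    intervalIntegral.integral_of_le zero_le_one, integral_Ioc_eq_integral_Ioo]
  refine setIntegral_congr_fun measurableSet_Ioo fun y hy => ?_
  have hx : 0 < 1 - y := sub_pos.2 hy.2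
  have hx' : (1 - y : ℂ) ≠ 0 := by exact_mod_cast hx.ne'
  have hpow : (y : ℂ) ^ α = (Complex.exp (-α * Real.log y))⁻¹ := by
    rw [Complex.cpow_def_of_ne_zero (by exact_mod_cast hy.1.ne'), ← Complex.exp_neg,
      Complex.ofReal_log hy.1.le]
    ring_nf
  simp only [MPL_eq_mul_toReal_tsum_polylogCoeff hk hkpos hx.le, powerSeriesDensity,
    sub_sub_cancel, Complex.real_smul]
  push_cast
  rw [sub_sub_cancel, hpow]
  field_simp

end PolylogIntegral

theorem stmt0 (k : List ℕ) (hk : k ≠ []) (hkpos : ∀ a ∈ k, 0 < a)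
    (m : ℕ) (hm : 0 < m) (α : ℂ) (hα : ∀ j : ℕ, 0 < j → α ≠ (j : ℂ)) (hre : α.re < 1) :
    (∫ x in (0:ℝ)..1,
        ((MPL k x * Real.log (1 - x) ^ m : ℝ) : ℂ) /
          ((x : ℂ) * ((1 : ℂ) - (x : ℂ)) ^ α)) =
      (-1) ^ m * (Nat.factorial m : ℂ) *
        ∑ j ∈ Finset.Nat.antidiagonalTuple (k.sum + 1 - k.length) m,
          ((∏ i : Fin (k.sum + 1 - k.length), Nat.choose
              ((plusOne (HDual k.reverse)).getD (i : ℕ) 0 + j i - 1) (j i) : ℕ) : ℂ) *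
            HMZV (List.ofFn fun i : Fin (k.sum + 1 - k.length) =>
              (plusOne (HDual k.reverse)).getD (i : ℕ) 0 + j i) (1 - α) := by
  rw [integral_MPL_mul_log_pow_div hk hkpos,
    integral_log_pow_mul_exp_powerSeriesMeasure
      (fun s => betaTransform_polylogCoeff_succ_lt_top hk)
      (fun a => betaTransform_polylogCoeff_succ_eq_chainSum hk hkpos) m (by simpa using hre)]
  simp only [HMZV_ofFn, sub_sub_cancel_left]
  rfl
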